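/- Let w = x^{a_1}y^{b_1}···x^{a_r}y^{b_r} be a reduced word of complexity r, and write a = a_1, b = b_1. Let F = ℚ, or F = F_p for a prime p with p > r/2 and p ≠ r. Suppose that over F the trace polynomial satisfies f_w(s,u,t) = D_r(q(s,u,t)) for some q ∈ F[s,u,t], and that w is trace-similar to (x^a y^b)^r. Then w = (x^a y^b)^r; that is, a_i = a and b_i = b for all i. -/

import Mathlib

open Matrix Polynomial

abbrev SL2 (K : Type) [CommRing K] : Type := Matrix.SpecialLinearGroup (Fin 2) K

abbrev PSL2 (K : Type) [CommRing K] : Type := SL2 K ⧸ Subgroup.center (SL2 K)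

/-- Evaluation of a word `w ∈ F₂` at a pair of group elements. -/
def wordEval {G : Type*} [Group G] (w : FreeGroup (Fin 2)) (g₁ g₂ : G) : G :=
  (FreeGroup.lift ![g₁, g₂]) w

/-- The word map `P_{w,G} : G × G → G` for `G = SL(2,K)`. -/
def wordMap (w : FreeGroup (Fin 2)) (K : Type) [CommRing K] :
    SL2 K × SL2 K → SL2 K := fun g => wordEval w g.1 g.2

/-- The point `(tr x, tr xy, tr y)`. -/
def trPoint {K : Type} [CommRing K] (x y : SL2 K) : Fin 3 → K :=
  ![Matrix.trace (x : Matrix (Fin 2) (Fin 2) K),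
    Matrix.trace ((x * y : SL2 K) : Matrix (Fin 2) (Fin 2) K),
    Matrix.trace (y : Matrix (Fin 2) (Fin 2) K)]

/-- `f ∈ ℤ[s,u,t]` is the trace polynomial of the word `w`. -/
def IsTracePolynomial (w : FreeGroup (Fin 2)) (f : MvPolynomial (Fin 3) ℤ) : Prop :=
  ∀ (K : Type) [CommRing K], ∀ x y : SL2 K,
    Matrix.trace ((wordEval w x y : SL2 K) : Matrix (Fin 2) (Fin 2) K) =
      MvPolynomial.eval (trPoint x y) (MvPolynomial.map (Int.castRingHom K) f)

/-- `f : X → Y` is `ε`-equidistributed. -/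
def IsEquidistributed {X Y : Type*} (f : X → Y) (ε : ℝ) : Prop :=
  ∃ Y' : Set Y,
    (1 - ε) * (Nat.card Y) < (Nat.card Y' : ℝ) ∧
    ∀ y ∈ Y',
      |(Nat.card {x : X // f x = y} : ℝ) - (Nat.card X : ℝ) / (Nat.card Y)| <
        ε * (Nat.card X) / (Nat.card Y)

/-- The family of word maps on `SL(2,p^n)` is `p`-equidistributed. -/
def IsPEquidistributed (w : FreeGroup (Fin 2)) (p : ℕ) (hp : p.Prime) : Prop :=
  letI : Fact p.Prime := ⟨hp⟩
  ∃ ε : ℕ → ℝ,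
    Filter.Tendsto (fun n : ℕ => ε (p ^ n)) Filter.atTop (nhds 0) ∧
    ∀ᶠ n : ℕ in Filter.atTop,
      IsEquidistributed (wordMap w (GaloisField p n)) (ε (p ^ n))

/-- The family of word maps on `SL(2,q)`, `q` ranging over all prime powers,
is equidistributed. -/
def IsEquidistributedFamily (w : FreeGroup (Fin 2)) : Prop :=
  ∃ ε : ℕ → ℝ,
    Filter.Tendsto ε Filter.atTop (nhds 0) ∧
    ∀ (p : ℕ) (hp : p.Prime),
      letI : Fact p.Prime := ⟨hp⟩
      ∀ᶠ n : ℕ in Filter.atTop,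
        IsEquidistributed (wordMap w (GaloisField p n)) (ε (p ^ n))

/-- Reduction of an integral polynomial mod `p`. -/
noncomputable def reduceMod (p : ℕ) (P : MvPolynomial (Fin 3) ℤ) : MvPolynomial (Fin 3) (ZMod p) :=
  MvPolynomial.map (Int.castRingHom (ZMod p)) P

/-- `P = h ∘ Q` with `deg Q ≥ 1`, `deg h ≥ 2`. -/
def IsCompositePoly (F : Type) [CommRing F] (P : MvPolynomial (Fin 3) F) : Prop :=
  ∃ (Q : MvPolynomial (Fin 3) F) (h : Polynomial F),
    1 ≤ Q.totalDegree ∧ 2 ≤ h.natDegree ∧ P = Polynomial.aeval Q h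

def IsPComposite (p : ℕ) (P : MvPolynomial (Fin 3) ℤ) : Prop :=
  IsCompositePoly (ZMod p) (reduceMod p P)

/-- `h` is a permutation polynomial of every finite extension of `F_p`. -/
def IsPermAllExt (p : ℕ) (h : Polynomial (ZMod p)) : Prop :=
  ∀ (K : Type) [Field K] [Algebra (ZMod p) K] [Finite K],
    Function.Bijective fun z : K => Polynomial.aeval z h

def IsPSpecial (p : ℕ) (P : MvPolynomial (Fin 3) ℤ) : Prop :=
  IsPComposite p P ∧
    ∃ (Q : MvPolynomial (Fin 3) (ZMod p)) (h : Polynomial (ZMod p)),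
      1 ≤ Q.totalDegree ∧ 2 ≤ h.natDegree ∧
      reduceMod p P = Polynomial.aeval Q h ∧ IsPermAllExt p h

def AlmostNoncomposite (P : MvPolynomial (Fin 3) ℤ) : Prop :=
  ∀ p : ℕ, p.Prime → ¬ IsPComposite p P ∨ IsPSpecial p P

/-- The reduced word `x^{a₁}y^{b₁} ⋯ x^{a_r}y^{b_r}`. -/
def wordOf {r : ℕ} (a b : Fin r → ℤ) : FreeGroup (Fin 2) :=
  (List.ofFn fun i : Fin r =>
    FreeGroup.of (0 : Fin 2) ^ a i * FreeGroup.of (1 : Fin 2) ^ b i).prod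


namespace WordAux

noncomputable section

def Mm {K : Type} [Field K] (α β : K) (e : ℤ × ℤ) : Matrix (Fin 2) (Fin 2) K[X] :=
  !![C (α ^ e.1 * β ^ e.2) + C ((e.1 : K) * e.2) * X, C ((e.1 : K) * β ^ (-e.2));
     C (α ^ (-e.1) * e.2) * X, C (α ^ (-e.1) * β ^ (-e.2))]

lemma inv1 {K : Type} [Field K] (α β : K) (hα : α ≠ 0) (hβ : β ≠ 0) (t : List (ℤ × ℤ)) :
    ∀ h : ℤ × ℤ, (∀ p ∈ h :: t, (p.1 = 1 ∨ p.1 = -1) ∧ (p.2 = 1 ∨ p.2 = -1)) →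
    ∃ (E : K) (k1 k2 k3 k4 d : ℤ), E * E = 1 ∧ (d = 1 ∨ d = -1) ∧
      2 * (k1 - k2) = 2 * t.length + 1 + h.1 ∧
      (((h :: t).map (Mm α β)).prod 0 0).coeff (t.length + 1) = E ∧
      (((h :: t).map (Mm α β)).prod 0 0).coeff t.length =
        E * (k1 * (α * β) + k2 * (α * β⁻¹) + k3 * (α⁻¹ * β) + k4 * (α⁻¹ * β⁻¹)) ∧
      (((h :: t).map (Mm α β)).prod 1 0).coeff (t.length + 1) = E * h.1 * α ^ (-h.1) ∧
      (((h :: t).map (Mm α β)).prod 0 1).coeff t.length = E * d * β ^ (-d) ∧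
      (((h :: t).map (Mm α β)).prod 1 1).coeff t.length = E * d * β ^ (-d) * h.1 * α ^ (-h.1) ∧
      (∀ k, t.length + 1 < k → (((h :: t).map (Mm α β)).prod 0 0).coeff k = 0 ∧
        (((h :: t).map (Mm α β)).prod 1 0).coeff k = 0) ∧
      (∀ k, t.length < k → (((h :: t).map (Mm α β)).prod 0 1).coeff k = 0 ∧
        (((h :: t).map (Mm α β)).prod 1 1).coeff k = 0) := by
  induction t with
  | nil =>
    intro h hh
    obtain ⟨h1, h2⟩ := hh h (by simp)
    obtain ⟨e, d⟩ := h
    simp only at h1 h2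
    refine ⟨e * d, if e = 1 ∧ d = 1 then 1 else 0, if e = 1 ∧ d = -1 then -1 else 0,
      if e = -1 ∧ d = 1 then -1 else 0, if e = -1 ∧ d = -1 then 1 else 0, d, ?_, h2, ?_, ?_, ?_, ?_, ?_,
      ?_, ?_, ?_⟩
    · rcases h1 with rfl | rfl <;> rcases h2 with rfl | rfl <;> simp
    · rcases h1 with rfl | rfl <;> rcases h2 with rfl | rfl <;> simp
    · simp [Mm, coeff_C]
    · rcases h1 with rfl | rfl <;> rcases h2 with rfl | rfl <;> simp [Mm]
    · rcases h1 with rfl | rfl <;> rcases h2 with rfl | rfl <;> simp [Mm]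
    · rcases h1 with rfl | rfl <;> rcases h2 with rfl | rfl <;> simp [Mm]
    · rcases h1 with rfl | rfl <;> rcases h2 with rfl | rfl <;> simp [Mm, mul_comm α, mul_comm α⁻¹]
    · intro k hk
      simp only [List.length_nil] at hk
      obtain ⟨k, rfl⟩ : ∃ j, k = j + 2 := ⟨k - 2, by omega⟩
      rcases h1 with rfl | rfl <;> rcases h2 with rfl | rfl <;> simp [Mm, coeff_X]
    · intro k hk
      simp only [List.length_nil] at hk
      obtain ⟨k, rfl⟩ : ∃ j, k = j + 1 := ⟨k - 1, by omega⟩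
      rcases h1 with rfl | rfl <;> rcases h2 with rfl | rfl <;> simp [Mm, coeff_X]
  | cons g t ih =>
    intro h hh
    obtain ⟨E, k1, k2, k3, k4, d, hE, hd, hk, c1, c2, c3, c4, c5, v1, v2⟩ :=
      ih g (fun p hp => hh p (List.mem_cons_of_mem _ hp))
    obtain ⟨h1, h2⟩ := hh h (by simp)
    obtain ⟨g1, -⟩ := hh g (by simp)
    rw [List.map_cons, List.prod_cons]
    set P := ((g :: t).map (Mm α β)).prod with hP
    obtain ⟨e, f⟩ := h
    obtain ⟨e', f'⟩ := g
    simp only at h1 h2 g1 c3 c5 hk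
    have m00 : (Mm α β (e, f) * P) 0 0 = C (α ^ e * β ^ f) * P 0 0 +
      C ((e : K) * f) * (X * P 0 0) + C ((e : K) * β ^ (-f)) * P 1 0 := by
      simp [Matrix.mul_apply, Mm, Fin.sum_univ_two]; ring
    have m01 : (Mm α β (e, f) * P) 0 1 = C (α ^ e * β ^ f) * P 0 1 +
      C ((e : K) * f) * (X * P 0 1) + C ((e : K) * β ^ (-f)) * P 1 1 := by
      simp [Matrix.mul_apply, Mm, Fin.sum_univ_two]; ring
    have m10 : (Mm α β (e, f) * P) 1 0 = 
      C (α ^ (-e) * f) * (X * P 0 0) + C (α ^ (-e) * β ^ (-f)) * P 1 0 := by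
      simp [Matrix.mul_apply, Mm, Fin.sum_univ_two]; ring
    have m11 : (Mm α β (e, f) * P) 1 1 = 
      C (α ^ (-e) * f) * (X * P 0 1) + C (α ^ (-e) * β ^ (-f)) * P 1 1 := by
      simp [Matrix.mul_apply, Mm, Fin.sum_univ_two]; ring
    rw [m00, m01, m10, m11]
    simp only [List.length_cons]
    obtain ⟨v10, v11⟩ := v1 (t.length + 1 + 1) (by omega)
    obtain ⟨v20, v21⟩ := v2 (t.length + 1) (by omega)
    refine ⟨e * f * E, 
      k1 + (if e = 1 ∧ f = 1 then 1 else 0) + (if e' = -1 ∧ f = -1 then 1 else 0),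
      k2 + (if e = 1 ∧ f = -1 then -1 else 0) + (if e' = -1 ∧ f = 1 then -1 else 0),
      k3 + (if e = -1 ∧ f = 1 then -1 else 0) + (if e' = 1 ∧ f = -1 then -1 else 0),
      k4 + (if e = -1 ∧ f = -1 then 1 else 0) + (if e' = 1 ∧ f = 1 then 1 else 0), 
      d, ?_, hd, ?_, ?_, ?_, ?_, ?_, ?_, ?_, ?_⟩
    · rcases h1 with rfl | rfl <;> rcases h2 with rfl | rfl <;> simp [hE]
    · push_cast
      rcases h1 with rfl | rfl <;> rcases h2 with rfl | rfl <;> rcases g1 with rfl | rfl <;> 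
        simp <;> linarith
    · simp only [coeff_add, coeff_C_mul, coeff_X_mul, c1, v10, v11]; ring
    · simp only [coeff_add, coeff_C_mul, coeff_X_mul, c1, c2, c3]
      rcases h1 with rfl | rfl <;> rcases h2 with rfl | rfl <;> rcases g1 with rfl | rfl <;> 
        simp <;> ring
    · simp only [coeff_add, coeff_C_mul, coeff_X_mul, c1, v11]
      rcases h1 with rfl | rfl <;> simp <;> ring
    · simp only [coeff_add, coeff_C_mul, coeff_X_mul, c4, v20, v21]
      ring
    · simp only [coeff_add, coeff_C_mul, coeff_X_mul, c4, v20, v21]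
      rcases h1 with rfl | rfl <;> simp <;> ring
    · intro k hk
      obtain ⟨k, rfl⟩ : ∃ j, k = j + 1 := ⟨k - 1, by omega⟩
      simp only [coeff_add, coeff_C_mul, coeff_X_mul, v1 k (by omega), v1 (k+1) (by omega)]
      simp
    · intro k hk
      obtain ⟨k, rfl⟩ : ∃ j, k = j + 1 := ⟨k - 1, by omega⟩
      simp only [coeff_add, coeff_C_mul, coeff_X_mul, v2 k (by omega), v2 (k+1) (by omega)]
      simp

lemma inv0 {K : Type} [Field K] (α β : K) (hα : α ≠ 0) (hβ : β ≠ 0) (l : List (ℤ × ℤ)) :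
    ((l.map (Mm α β)).prod 0 0).coeff 0 = α ^ (l.map Prod.fst).sum * β ^ (l.map Prod.snd).sum ∧
    ((l.map (Mm α β)).prod 1 0).coeff 0 = 0 ∧
    ((l.map (Mm α β)).prod 1 1).coeff 0 =
      α ^ (-(l.map Prod.fst).sum) * β ^ (-(l.map Prod.snd).sum) := by
  induction l with
  | nil => simp
  | cons g t ih =>
    obtain ⟨i1, i2, i3⟩ := ih
    simp only [List.map_cons, List.prod_cons, List.sum_cons, Matrix.mul_apply, Fin.sum_univ_two, 
      coeff_add, mul_coeff_zero, i1, i2, i3]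
    refine ⟨?_, ?_, ?_⟩
    · simp [Mm, zpow_add₀ hα, zpow_add₀ hβ]; ring
    · simp [Mm]
    · rw [neg_add, neg_add, zpow_add₀ hα, zpow_add₀ hβ]; simp [Mm]; ring

lemma trace_facts {K : Type} [Field K] (α β : K) (hα : α ≠ 0) (hβ : β ≠ 0) 
    (h : ℤ × ℤ) (t : List (ℤ × ℤ))
    (hh : ∀ p ∈ h :: t, (p.1 = 1 ∨ p.1 = -1) ∧ (p.2 = 1 ∨ p.2 = -1)) :
    ∃ (E : K) (k1 k2 k3 k4 : ℤ), E * E = 1 ∧ k1 - k2 = t.length + 1 ∧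
      (((h :: t).map (Mm α β)).prod.trace).coeff (t.length + 1) = E ∧
      (((h :: t).map (Mm α β)).prod.trace).coeff t.length =
        E * (k1 * (α * β) + k2 * (α * β⁻¹) + k3 * (α⁻¹ * β) + k4 * (α⁻¹ * β⁻¹)) ∧
      (∀ k, t.length + 1 < k → (((h :: t).map (Mm α β)).prod.trace).coeff k = 0) ∧
      (((h :: t).map (Mm α β)).prod.trace).coeff 0 = 
        α ^ ((h :: t).map Prod.fst).sum * β ^ ((h :: t).map Prod.snd).sum +
        α ^ (-((h :: t).map Prod.fst).sum) * β ^ (-((h :: t).map Prod.snd).sum) := by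
  obtain ⟨E, k1, k2, k3, k4, d, hE, hd, hk, c1, c2, c3, c4, c5, v1, v2⟩ := inv1 α β hα hβ t h hh
  obtain ⟨i1, -, i3⟩ := inv0 α β hα hβ (h :: t)
  obtain ⟨h1, -⟩ := hh h (by simp)
  obtain ⟨e, f⟩ := h
  simp only at h1 hk c5
  simp only [Matrix.trace_fin_two, coeff_add]
  refine ⟨E, k1 + (if e = -1 ∧ d = -1 then 1 else 0), k2 + (if e = -1 ∧ d = 1 then -1 else 0),
    k3 + (if e = 1 ∧ d = -1 then -1 else 0), k4 + (if e = 1 ∧ d = 1 then 1 else 0), 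
    hE, ?_, ?_, ?_, ?_, ?_⟩
  · rcases h1 with rfl | rfl <;> rcases hd with rfl | rfl <;> simp <;> omega
  · rw [c1, (v2 _ (by omega)).2, add_zero]
  · rw [c2, c5]
    rcases h1 with rfl | rfl <;> rcases hd with rfl | rfl <;> simp <;> ring
  · intro k hk
    rw [(v1 k hk).1, (v2 k (by omega)).2, add_zero]
  · rw [i1, i3]

lemma dickson_monic {F : Type} [Field F] (n : ℕ) : 
    (dickson 1 (1 : F) (n + 1)).natDegree = n + 1 ∧ (dickson 1 (1 : F) (n + 1)).Monic ∧ 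
      (dickson 1 (1 : F) n).natDegree ≤ n := by
  induction n with
  | zero => 
    refine ⟨by simp, by simp [monic_X], ?_⟩
    rw [dickson_zero]
    have : (3 - ((1 : ℕ) : F[X])) = C 2 := by rw [map_ofNat]; norm_num
    rw [this]; simp
  | succ n ih =>
    obtain ⟨i1, i2, i3⟩ := ih
    have hm : (X * dickson 1 (1 : F) (n + 1)).Monic := monic_X.mul i2
    have hn : (X * dickson 1 (1 : F) (n + 1)).natDegree = n + 2 := by
      rw [natDegree_X_mul i2.ne_zero, i1]
    have hlt : (C (1 : F) * dickson 1 (1 : F) n).degree < (X * dickson 1 (1 : F) (n + 1)).degree := by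
      rw [map_one, one_mul, degree_eq_natDegree hm.ne_zero, hn]
      refine lt_of_le_of_lt degree_le_natDegree ?_
      exact_mod_cast (by omega)
    refine ⟨?_, ?_, i1.le⟩
    · rw [dickson_add_two, natDegree_sub_eq_left_of_natDegree_lt, hn]
      rw [hn, map_one, one_mul]; omega
    · rw [dickson_add_two]
      exact hm.sub_of_left hlt

lemma dickson_lin {K : Type} [Field K] (c q : K) (n : ℕ) : 
    (aeval (C c * X + C q) (dickson 1 (1 : K) (n + 1))).coeff (n + 1) = c ^ (n + 1) ∧ 
    (aeval (C c * X + C q) (dickson 1 (1 : K) (n + 1))).coeff n = (n + 1) * c ^ n * q ∧ 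
    (∀ k, n < k → (aeval (C c * X + C q) (dickson 1 (1 : K) n)).coeff k = 0) ∧ 
    (∀ k, n + 1 < k → (aeval (C c * X + C q) (dickson 1 (1 : K) (n + 1))).coeff k = 0) := by
  induction n with
  | zero => 
    refine ⟨by simp [coeff_C], by simp, ?_, ?_⟩
    · intro k hk
      rw [dickson_zero]
      have : (3 - ((1 : ℕ) : K[X])) = C 2 := by rw [map_ofNat]; norm_num
      rw [this, aeval_C, algebraMap_eq, coeff_C, if_neg (by omega)]
    · intro k hk
      simp only [zero_add] at hk
      simp [coeff_C, coeff_X, hk.ne]; omega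
  | succ n ih =>
    obtain ⟨i1, i2, i3, i4⟩ := ih
    have : aeval (C c * X + C q) (dickson 1 (1 : K) (n + 1 + 1)) = 
       C c * (X * aeval (C c * X + C q) (dickson 1 (1 : K) (n + 1))) + 
       C q * aeval (C c * X + C q) (dickson 1 (1 : K) (n + 1)) - 
       aeval (C c * X + C q) (dickson 1 (1 : K) n) := by
      rw [dickson_add_two]
      simp only [map_sub, map_mul, aeval_X, map_one, one_mul]
      ring
    rw [this]
    refine ⟨?_, ?_, i4, ?_⟩
    · simp only [coeff_add, coeff_sub, coeff_C_mul, coeff_X_mul, i1, i4 (n+1+1) (by omega),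
        i3 (n+1+1) (by omega)]
      ring
    · simp only [coeff_add, coeff_sub, coeff_C_mul, coeff_X_mul, i1, i2, 
        i3 (n+1) (by omega)]
      push_cast
      ring
    · intro k hk
      obtain ⟨k, rfl⟩ : ∃ j, k = j + 1 := ⟨k - 1, by omega⟩
      simp only [coeff_add, coeff_sub, coeff_C_mul, coeff_X_mul, i4 k (by omega), 
        i4 (k+1) (by omega), i3 (k+1) (by omega)]
      simp

lemma dickson_val {K Γ : Type} [Field K] [LinearOrderedCommGroupWithZero Γ] (v : Valuation K Γ)
    (h2 : v 2 ≤ 1) (q : K) (hq : 1 < v q) (n : ℕ) : 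
    v ((dickson 1 (1 : K) (n + 1)).eval q) = v q ^ (n + 1) ∧ 
    v ((dickson 1 (1 : K) n).eval q) ≤ v q ^ n := by
  induction n with
  | zero => 
    refine ⟨by simp, ?_⟩
    rw [dickson_zero]
    have : (3 - ((1 : ℕ) : K[X])) = C 2 := by rw [map_ofNat]; norm_num
    rw [this]; simpa using h2
  | succ n ih =>
    refine ⟨?_, ih.1.le⟩
    rw [dickson_add_two]
    simp only [eval_sub, eval_mul, eval_X, eval_C, one_mul]
    rw [Valuation.map_sub_eq_of_lt_left]
    · rw [map_mul, ih.1, ← pow_succ']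
    · rw [map_mul, ih.1]
      refine lt_of_le_of_lt ih.2 ?_
      rw [← pow_succ']
      exact pow_lt_pow_right₀ hq (by omega)

lemma key {K : Type} [Field K] (α β : K) (hα : α ≠ 0) (hβ : β ≠ 0) 
    (l : List (ℤ × ℤ)) (r : ℕ) (hr : 0 < r) (hl : l.length = r)
    (hh : ∀ p ∈ l, (p.1 = 1 ∨ p.1 = -1) ∧ (p.2 = 1 ∨ p.2 = -1))
    (Q : K[X]) (hQ : (l.map (Mm α β)).prod.trace = aeval Q (dickson 1 (1 : K) r)) :
    ∃ (c q : K) (k1 k2 k3 k4 : ℤ), (c ^ r) ^ 2 = 1 ∧ k1 - k2 = r ∧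
      r * q = c * (k1 * (α * β) + k2 * (α * β⁻¹) + k3 * (α⁻¹ * β) + k4 * (α⁻¹ * β⁻¹)) ∧
      (dickson 1 (1 : K) r).eval q =
        α ^ (l.map Prod.fst).sum * β ^ (l.map Prod.snd).sum +
        α ^ (-(l.map Prod.fst).sum) * β ^ (-(l.map Prod.snd).sum) := by
  obtain ⟨n, rfl⟩ : ∃ n, r = n + 1 := ⟨r - 1, by omega⟩
  obtain ⟨h, t, rfl⟩ := List.exists_cons_of_length_eq_add_one hl
  obtain ⟨E, k1, k2, k3, k4, hE, hk, c1, c2, v, c0⟩ := trace_facts α β hα hβ h t hh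
  have hn : t.length = n := by simpa using hl
  subst hn
  rw [hQ] at c1 c2 v c0
  have hE0 : E ≠ 0 := by rintro rfl; simp at hE
  have hdeg : (aeval Q (dickson 1 (1 : K) (t.length + 1))).natDegree = t.length + 1 := by
    apply natDegree_eq_of_le_of_coeff_ne_zero
    · rw [natDegree_le_iff_coeff_eq_zero]; exact v
    · rw [c1]; exact hE0
  have hd1 : Q.natDegree = 1 := by
    rw [← comp_eq_aeval, natDegree_comp, (dickson_monic t.length).1] at hdeg
    exact Nat.eq_of_mul_eq_mul_left (Nat.succ_pos t.length) (by simpa using hdeg)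
  obtain ⟨c, hc, q, rfl⟩ := natDegree_eq_one.1 hd1
  obtain ⟨d1, d2, -, -⟩ := dickson_lin c q t.length
  rw [d1] at c1
  rw [d2] at c2
  refine ⟨c, q, k1, k2, k3, k4, ?_, by rw [hk]; simp, ?_, ?_⟩
  · rw [c1, sq, hE]
  · apply mul_left_cancel₀ hE0
    rw [mul_left_comm E c, ← c2, ← c1]; push_cast; ring
  · rw [← c0, coeff_zero_eq_eval_zero, ← comp_eq_aeval, eval_comp]; simp


def uX {K : Type} [Field K] (s : K) : Kˣ →* SL2 K[X] where
  toFun l := ⟨!![C (l : K), C (s * ((l : K)⁻¹ - l)); 0, C (l : K)⁻¹], by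
    rw [Matrix.det_fin_two_of, ← C_mul]; simp⟩
  map_one' := by
    ext i j; fin_cases i <;> fin_cases j <;> simp
  map_mul' l m := by
    have hl := l.ne_zero
    have hm := m.ne_zero
    apply Subtype.ext
    refine Eq.trans ?_ (Matrix.mul_fin_two ..).symm
    have h1 : s * (((l * m : Kˣ) : K)⁻¹ - ((l * m : Kˣ) : K)) = 
      l * (s * ((m : K)⁻¹ - m)) + (s * ((l : K)⁻¹ - l)) * (m : K)⁻¹ := by
      rw [Units.val_mul]; field_simp; ring
    have h2 : ((l * m : Kˣ) : K)⁻¹ = (l : K)⁻¹ * (m : K)⁻¹ := by 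
      rw [Units.val_mul, mul_inv]
    dsimp only
    rw [h1, h2, Units.val_mul]
    simp only [C_mul, C_add, mul_zero, add_zero, zero_mul, zero_add]

def uY {K : Type} [Field K] (s : K) : Kˣ →* SL2 K[X] where
  toFun l := ⟨!![C (l : K), 0; C (s * ((l : K)⁻¹ - l)) * X, C (l : K)⁻¹], by
    rw [Matrix.det_fin_two_of, ← C_mul]; simp⟩
  map_one' := by
    ext i j; fin_cases i <;> fin_cases j <;> simp
  map_mul' l m := by
    have hl := l.ne_zero
    have hm := m.ne_zero
    apply Subtype.ext
    refine Eq.trans ?_ (Matrix.mul_fin_two ..).symm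
    have h1 : s * (((l * m : Kˣ) : K)⁻¹ - ((l * m : Kˣ) : K)) = 
      (s * ((l : K)⁻¹ - l)) * m + (l : K)⁻¹ * (s * ((m : K)⁻¹ - m)) := by
      rw [Units.val_mul]; field_simp; ring
    have h2 : ((l * m : Kˣ) : K)⁻¹ = (l : K)⁻¹ * (m : K)⁻¹ := by 
      rw [Units.val_mul, mul_inv]
    dsimp only
    rw [h1, h2, Units.val_mul]
    simp only [C_mul, C_add, mul_zero, add_zero, zero_mul, zero_add]
    congr 3
    ring

lemma uXY {K : Type} [Field K] (α β : Kˣ) (hα : (α : K)⁻¹ - α ≠ 0) (hβ : (β : K)⁻¹ - β ≠ 0) 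
    (e d : ℤ) (he : e = 1 ∨ e = -1) (hd : d = 1 ∨ d = -1) :
    ((uX ((α : K)⁻¹ - α)⁻¹ (α ^ e) * uY ((β : K)⁻¹ - β)⁻¹ (β ^ d) : SL2 K[X]) : 
      Matrix (Fin 2) (Fin 2) K[X]) = Mm (α : K) β (e, d) := by
  have hX : ((uX ((α : K)⁻¹ - α)⁻¹ (α ^ e) : SL2 K[X]) : Matrix (Fin 2) (Fin 2) K[X]) = 
      !![C ((α : K) ^ e), C (e : K); 0, C ((α : K) ^ (-e))] := by
    have : ((α : K)⁻¹ - α)⁻¹ * (((α : K) ^ e)⁻¹ - (α : K) ^ e) = e := by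
      rcases he with rfl | rfl
      · simp [inv_mul_cancel₀ hα]
      · rw [show (((α : K) ^ (-1 : ℤ))⁻¹ - (α : K) ^ (-1 : ℤ)) = - ((α : K)⁻¹ - α) by simp, mul_neg,
          inv_mul_cancel₀ hα]; simp
    show !![_, _; _, _] = _
    rw [Units.val_zpow_eq_zpow_val, this, _root_.zpow_neg]
  have hY : ((uY ((β : K)⁻¹ - β)⁻¹ (β ^ d) : SL2 K[X]) : Matrix (Fin 2) (Fin 2) K[X]) = 
      !![C ((β : K) ^ d), 0; C (d : K) * X, C ((β : K) ^ (-d))] := by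
    have : ((β : K)⁻¹ - β)⁻¹ * (((β : K) ^ d)⁻¹ - (β : K) ^ d) = d := by
      rcases hd with rfl | rfl
      · simp [inv_mul_cancel₀ hβ]
      · rw [show (((β : K) ^ (-1 : ℤ))⁻¹ - (β : K) ^ (-1 : ℤ)) = - ((β : K)⁻¹ - β) by simp, mul_neg,
          inv_mul_cancel₀ hβ]; simp
    show !![_, _; _, _] = _
    rw [Units.val_zpow_eq_zpow_val, this, _root_.zpow_neg]
  rw [Matrix.SpecialLinearGroup.coe_mul, hX, hY, Matrix.mul_fin_two, Mm]
  simp only [C_mul, mul_zero, zero_mul, zero_add, mul_assoc]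

def slHom (R : Type) [CommRing R] : SL2 R →* Matrix (Fin 2) (Fin 2) R where
  toFun g := g
  map_one' := rfl
  map_mul' _ _ := rfl

open RatFunc WithZero in
lemma val_int_le {F : Type} [Field F] [DecidableEq (RatFunc F)] (k : ℤ) : 
    inftyValuation F (k : RatFunc F) ≤ 1 := by
  rw [← map_intCast (RatFunc.C : F →+* RatFunc F)]
  by_cases h : (k : F) = 0
  · simp [h]
  · rw [inftyValuation.C _ h]

open RatFunc WithZero in
lemma val_int_eq {F : Type} [Field F] [DecidableEq (RatFunc F)] (k : ℤ) (h : (k : F) ≠ 0) : 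
    inftyValuation F (k : RatFunc F) = 1 := by
  rw [← map_intCast (RatFunc.C : F →+* RatFunc F), inftyValuation.C _ h]

open RatFunc WithZero in
lemma valS {F : Type} [Field F] [DecidableEq (RatFunc F)] (P B : ℤ) (hB : 0 < B) (hP : B < P)
    (k1 k2 k3 k4 : ℤ) (hk : ((k1 - k2 : ℤ) : F) ≠ 0) :
    ∃ D : ℤ, (D = P + B ∨ D = P - B) ∧ inftyValuation F ((k1 : RatFunc F) * (RatFunc.X ^ P * RatFunc.X ^ B) +
      (k2 : RatFunc F) * (RatFunc.X ^ P * (RatFunc.X ^ B)⁻¹) + 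
      (k3 : RatFunc F) * ((RatFunc.X ^ P)⁻¹ * RatFunc.X ^ B) + (k4 : RatFunc F) * ((RatFunc.X ^ P)⁻¹ * (RatFunc.X ^ B)⁻¹)) =
      exp D := by
  have hX : (RatFunc.X : RatFunc F) ≠ 0 := RatFunc.X_ne_zero
  simp only [← _root_.zpow_neg, ← zpow_add₀ hX]
  have hle : ∀ k T : ℤ, inftyValuation F ((k : RatFunc F) * RatFunc.X ^ T) ≤ exp T := by
    intro k T
    rw [map_mul, inftyValuation.X_zpow]
    exact mul_le_of_le_one_left' (val_int_le k)
  have heq : ∀ k T : ℤ, (k : F) ≠ 0 → inftyValuation F ((k : RatFunc F) * RatFunc.X ^ T) = exp T := by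
    intro k T h
    rw [map_mul, inftyValuation.X_zpow, val_int_eq k h, one_mul]
  have hlt : ∀ k T D : ℤ, T < D → inftyValuation F ((k : RatFunc F) * RatFunc.X ^ T) < exp D := 
    fun k T D h => (hle k T).trans_lt (exp_lt_exp.2 h)
  by_cases h1 : (k1 : F) = 0
  · have h2 : (k2 : F) ≠ 0 := by
      intro h2; apply hk; push_cast; rw [h1, h2, sub_zero]
    refine ⟨P - B, Or.inr rfl, ?_⟩
    have h1' : (k1 : RatFunc F) = 0 := by
      rw [← map_intCast (RatFunc.C : F →+* RatFunc F), h1, map_zero]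
    rw [h1', zero_mul, zero_add, add_assoc, Valuation.map_add_eq_of_lt_left, heq k2 _ h2]
    · rfl
    · rw [heq k2 _ h2]
      exact Valuation.map_add_lt _ (hlt _ _ _ (by omega)) (hlt _ _ _ (by omega))
  · refine ⟨P + B, Or.inl rfl, ?_⟩
    rw [add_assoc, add_assoc, Valuation.map_add_eq_of_lt_left, heq k1 _ h1]
    rw [heq k1 _ h1]
    exact Valuation.map_add_lt _ (hlt _ _ _ (by omega)) 
      (Valuation.map_add_lt _ (hlt _ _ _ (by omega)) (hlt _ _ _ (by omega)))

open RatFunc WithZero in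
lemma valR {F : Type} [Field F] [DecidableEq (RatFunc F)] (T D : ℤ) (hD : 0 < D)
    (h : inftyValuation F (RatFunc.X ^ T + RatFunc.X ^ (-T)) = exp D) : T = D ∨ T = -D := by
  rcases lt_trichotomy T 0 with hT | hT | hT
  · rw [Valuation.map_add_eq_of_lt_right] at h
    · rw [inftyValuation.X_zpow, exp_inj] at h; omega
    · rw [inftyValuation.X_zpow, inftyValuation.X_zpow, exp_lt_exp]; omega
  · exfalso
    have := Valuation.map_add_le (inftyValuation F) (x := RatFunc.X ^ T) (y := RatFunc.X ^ (-T)) 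
      (g := 1) (by simp [hT]) (by simp [hT])
    rw [h, ← exp_zero, exp_le_exp] at this
    omega
  · rw [Valuation.map_add_eq_of_lt_left] at h
    · rw [inftyValuation.X_zpow, exp_inj] at h; omega
    · rw [inftyValuation.X_zpow, inftyValuation.X_zpow, exp_lt_exp]; omega

open RatFunc WithZero in
lemma final {F : Type} [Field F] (P B : ℤ) (hB : 0 < B) (hP : B < P)
    (l : List (ℤ × ℤ)) (r : ℕ) (hr : 0 < r) (hrF : (r : F) ≠ 0) (hl : l.length = r)
    (hh : ∀ p ∈ l, (p.1 = 1 ∨ p.1 = -1) ∧ (p.2 = 1 ∨ p.2 = -1))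
    (Q : (RatFunc F)[X]) (hQ : (l.map (Mm (RatFunc.X ^ P) (RatFunc.X ^ B))).prod.trace = 
      aeval Q (dickson 1 (1 : RatFunc F) r)) :
    ∃ D : ℤ, (D = P + B ∨ D = P - B) ∧ 
      (P * (l.map Prod.fst).sum + B * (l.map Prod.snd).sum = r * D ∨ 
       P * (l.map Prod.fst).sum + B * (l.map Prod.snd).sum = - (r * D)) := by
  classical
  have hX : (RatFunc.X : RatFunc F) ≠ 0 := RatFunc.X_ne_zero
  obtain ⟨c, q, k1, k2, k3, k4, hc, hk, hq, hv⟩ := 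
    key _ _ (zpow_ne_zero P hX) (zpow_ne_zero B hX) l r hr hl hh Q hQ
  obtain ⟨D, hD, hS⟩ := valS (F := F) P B hB hP k1 k2 k3 k4 (by rw [hk]; simpa using hrF)
  have hDpos : 0 < D := by omega
  have hvc : inftyValuation F c = 1 := by
    have := congrArg (inftyValuation F) hc
    rw [← pow_mul, map_pow, map_one] at this
    have hne : r * 2 ≠ 0 := by omega
    exact (pow_eq_one_iff_of_nonneg zero_le hne).1 this
  have hvr : inftyValuation F (r : RatFunc F) = 1 := by
    have := val_int_eq (F := F) (r : ℤ) (by simpa using hrF)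
    simpa using this
  have hvq : inftyValuation F q = exp D := by
    have := congrArg (inftyValuation F) hq
    rwa [map_mul, map_mul, hvc, hvr, one_mul, one_mul, hS] at this
  obtain ⟨n, rfl⟩ : ∃ n, r = n + 1 := ⟨r - 1, by omega⟩
  have h2 : inftyValuation F 2 ≤ 1 := by simpa using val_int_le (F := F) 2
  have := (dickson_val (inftyValuation F) h2 q 
    (by rw [hvq, ← exp_zero, exp_lt_exp]; exact hDpos) n).1
  rw [hv, hvq, ← WithZero.exp_nsmul, ← _root_.zpow_mul, ← _root_.zpow_mul, ← _root_.zpow_mul, ← _root_.zpow_mul, ← zpow_add₀ hX, 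
    ← zpow_add₀ hX, mul_neg, mul_neg, ← neg_add] at this
  refine ⟨D, hD, ?_⟩
  have := valR _ _ (by positivity) this
  simpa using this

lemma rF {r : ℕ} (hr : 0 < r) (F : Type) [Field F]
    (hF : Nonempty (F ≃+* ℚ) ∨
      ∃ p : ℕ, p.Prime ∧ Nonempty (F ≃+* ZMod p) ∧ r < 2 * p ∧ p ≠ r) : (r : F) ≠ 0 := by
  intro h
  rcases hF with ⟨⟨φ⟩⟩ | ⟨p, hp, ⟨φ⟩, h2, h3⟩
  · have := congrArg φ h
    rw [map_natCast, map_zero] at this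
    have : r = 0 := by exact_mod_cast this
    omega
  · have := congrArg φ h
    rw [map_natCast, map_zero, ZMod.natCast_eq_zero_iff] at this
    obtain ⟨k, rfl⟩ := this
    have : k < 2 := by
      by_contra hk
      push Not at hk
      nlinarith
    interval_cases k <;> simp_all

lemma all_eq {r : ℕ} (a : Fin r → ℤ) (A : ℤ) (h : ∀ i, a i ≤ A) (hs : ∑ i, a i = r * A) :
    ∀ i, a i = A := by
  have : ∑ i, (A - a i) = 0 := by
    rw [Finset.sum_sub_distrib, hs]; simp
  rw [Finset.sum_eq_zero_iff_of_nonneg (fun i _ => sub_nonneg.2 (h i))] at this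
  intro i
  have := this i (Finset.mem_univ i)
  omega

lemma all_const {r : ℕ} (hr : 0 < r) (e : Fin r → ℤ) (he : ∀ i, e i = 1 ∨ e i = -1)
    (hs : ∑ i, e i = r ∨ ∑ i, e i = -r) : ∀ i, e i = e ⟨0, hr⟩ := by
  rcases hs with hs | hs
  · have := all_eq e 1 (fun i => by rcases he i with h | h <;> omega) (by rw [hs]; ring)
    intro i; rw [this, this]
  · have := all_eq (fun i => - e i) 1 (fun i => by rcases he i with h | h <;> simp [h]) 
      (by rw [Finset.sum_neg_distrib, hs]; ring)
    intro i
    have h1 := this i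
    have h2 := this ⟨0, hr⟩
    omega

lemma sum_bd {r : ℕ} (e : Fin r → ℤ) (he : ∀ i, e i = 1 ∨ e i = -1) : 
    |∑ i, e i| ≤ r := by
  refine (Finset.abs_sum_le_sum_abs _ _).trans ?_
  rw [Finset.sum_congr rfl (fun i _ => show |e i| = 1 by rcases he i with h | h <;> simp [h])]
  simp

lemma arith (r m n A B N D : ℤ) (hr : 0 < r) (hA : 0 < A) (hB : 0 < B) (hN : N = 2 * r * B + 1)
    (hm : |m| ≤ r) (hn : |n| ≤ r) (hD : D = N * A + B ∨ D = N * A - B) 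
    (h : N * A * m + B * n = r * D ∨ N * A * m + B * n = -(r * D)) : 
    (m = r ∨ m = -r) ∧ (n = r ∨ n = -r) := by
  rw [abs_le] at hm hn
  have hbn : B * n ≤ B * r := by nlinarith
  have hbn' : -(B * r) ≤ B * n := by nlinarith
  have hNA : 2 * r * B + 1 ≤ N * A := by nlinarith
  have hBr : 0 < B * r := by positivity
  have hm' : m = r ∨ m = -r := by
    rcases h with h | h
    · left
      by_contra hne
      have : 1 ≤ r - m := by omega
      have : N * A ≤ N * A * (r - m) := by nlinarith
      rcases hD with rfl | rfl <;> nlinarith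
    · right
      by_contra hne
      have : 1 ≤ r + m := by omega
      have : N * A ≤ N * A * (r + m) := by nlinarith
      rcases hD with rfl | rfl <;> nlinarith
  refine ⟨hm', ?_⟩
  have hpos : 0 < N * A * r := by nlinarith
  have hbig : 2 * (B * r) < N * A * r := by nlinarith
  have hB0 : B ≠ 0 := hB.ne'
  rcases hm' with rfl | rfl <;> rcases h with h | h <;> rcases hD with rfl | rfl
  · left; apply mul_left_cancel₀ hB0; linarith
  · right; apply mul_left_cancel₀ hB0; linarith
  · exfalso; nlinarith
  · exfalso; nlinarith
  · exfalso; nlinarith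
  · exfalso; nlinarith
  · right; apply mul_left_cancel₀ hB0; linarith
  · left; apply mul_left_cancel₀ hB0; linarith

lemma eval_dec {F R : Type} [Field F] [CommRing R] [Algebra F R] (f : MvPolynomial (Fin 3) ℤ) 
    (q : MvPolynomial (Fin 3) F) (r : ℕ)
    (hdec : MvPolynomial.map (Int.castRingHom F) f =
      Polynomial.aeval q (Polynomial.dickson 1 (1 : F) r)) (pt : Fin 3 → R) :
    MvPolynomial.eval pt (MvPolynomial.map (Int.castRingHom R) f) = 
      (dickson 1 (1 : R) r).eval (MvPolynomial.aeval pt q) := by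
  have h1 : MvPolynomial.map (Int.castRingHom R) f = 
      MvPolynomial.map (algebraMap F R) (MvPolynomial.map (Int.castRingHom F) f) := by
    rw [MvPolynomial.map_map]; congr 2; exact Subsingleton.elim _ _
  have h2 : MvPolynomial.eval pt (MvPolynomial.map (algebraMap F R) 
      (MvPolynomial.map (Int.castRingHom F) f)) = 
      MvPolynomial.aeval pt (MvPolynomial.map (Int.castRingHom F) f) := by
    rw [MvPolynomial.eval_map, MvPolynomial.aeval_def]
  rw [h1, h2, hdec, ← Polynomial.aeval_algHom_apply, Polynomial.aeval_def, ← Polynomial.eval_map,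
    Polynomial.map_dickson, map_one]

lemma dickson_up {K : Type} [Field K] (Q : K[X]) (r : ℕ) : 
    (dickson 1 (1 : K[X]) r).eval Q = aeval Q (dickson 1 (1 : K) r) := by
  rw [Polynomial.aeval_def, ← Polynomial.eval_map, Polynomial.map_dickson, map_one]

lemma word_mat {R : Type} [CommRing R] {r : ℕ} (a b : Fin r → ℤ) (x y : SL2 R) :
    ((wordEval (wordOf a b) x y : SL2 R) : Matrix (Fin 2) (Fin 2) R) = 
      (List.ofFn fun i => ((x ^ a i * y ^ b i : SL2 R) : Matrix (Fin 2) (Fin 2) R)).prod := by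
  have h : wordEval (wordOf a b) x y = (List.ofFn fun i => x ^ a i * y ^ b i).prod := by
    rw [wordEval, wordOf, map_list_prod, List.map_ofFn]
    congr 2
    funext i
    simp
  rw [h]
  have := map_list_prod (slHom R) (List.ofFn fun i => x ^ a i * y ^ b i)
  rw [List.map_ofFn] at this
  exact this

lemma abs_of_sim {r : ℕ} (hr : 0 < r) (a : Fin r → ℤ) 
    (h : (↑(List.ofFn fun i => |a i|) : Multiset ℤ) = Multiset.replicate r |a ⟨0, hr⟩|) (i : Fin r) :
    |a i| = |a ⟨0, hr⟩| := by
  have : |a i| ∈ (↑(List.ofFn fun i => |a i|) : Multiset ℤ) := by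
    rw [Multiset.mem_coe, List.mem_ofFn]; exact ⟨i, rfl⟩
  rw [h] at this
  exact Multiset.eq_of_mem_replicate this

lemma sgn {x : ℤ} (h : x ≠ 0) : x.sign = 1 ∨ x.sign = -1 := by
  rcases lt_or_gt_of_ne h with h | h
  · right; exact Int.sign_eq_neg_one_of_neg h
  · left; exact Int.sign_eq_one_of_pos h

lemma inv_sub_ne {F : Type} [Field F] (P : ℤ) (hP : 0 < P) : 
    ((RatFunc.X : RatFunc F) ^ P)⁻¹ - RatFunc.X ^ P ≠ 0 := by
  classical
  intro h
  have := congrArg (RatFunc.inftyValuation F) (sub_eq_zero.1 h)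
  rw [← _root_.zpow_neg, RatFunc.inftyValuation.X_zpow, RatFunc.inftyValuation.X_zpow, 
    WithZero.exp_inj] at this
  omega

end

end WordAux

open WordAux in
theorem word_eq_power_of_trace_similar {r : ℕ} (hr : 0 < r)
    (a b : Fin r → ℤ) (hab : ∀ i, a i ≠ 0 ∧ b i ≠ 0)
    (F : Type) [Field F]
    (hF : Nonempty (F ≃+* ℚ) ∨
      ∃ p : ℕ, p.Prime ∧ Nonempty (F ≃+* ZMod p) ∧ r < 2 * p ∧ p ≠ r)
    (f : MvPolynomial (Fin 3) ℤ) (hf : IsTracePolynomial (wordOf a b) f)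
    (q : MvPolynomial (Fin 3) F)
    (hdec : MvPolynomial.map (Int.castRingHom F) f =
      Polynomial.aeval q (Polynomial.dickson 1 (1 : F) r))
    (hsim : (↑(List.ofFn fun i => |a i|) : Multiset ℤ) = Multiset.replicate r |a ⟨0, hr⟩| ∧
            (↑(List.ofFn fun i => |b i|) : Multiset ℤ) = Multiset.replicate r |b ⟨0, hr⟩|) :
    ∀ i, a i = a ⟨0, hr⟩ ∧ b i = b ⟨0, hr⟩ := by
  have hrF : (r : F) ≠ 0 := rF hr F hF
  have haa := abs_of_sim hr a hsim.1
  have hbb := abs_of_sim hr b hsim.2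
  set A : ℤ := |a ⟨0, hr⟩| with hA
  set B : ℤ := |b ⟨0, hr⟩| with hB
  have hApos : 0 < A := abs_pos.2 (hab _).1
  have hBpos : 0 < B := abs_pos.2 (hab _).2
  have hsa : ∀ i, a i = A * (a i).sign := fun i => by
    rw [← haa i, mul_comm, Int.sign_mul_abs]
  have hsb : ∀ i, b i = B * (b i).sign := fun i => by
    rw [← hbb i, mul_comm, Int.sign_mul_abs]
  have hea : ∀ i, (a i).sign = 1 ∨ (a i).sign = -1 := fun i => sgn (hab i).1
  have heb : ∀ i, (b i).sign = 1 ∨ (b i).sign = -1 := fun i => sgn (hab i).2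
  obtain ⟨N, hN⟩ : ∃ N : ℤ, N = 2 * r * B + 1 := ⟨_, rfl⟩
  have hr1 : (1 : ℤ) ≤ r := by exact_mod_cast hr
  have hBN : B < N := by nlinarith
  have hP : B < N * A := by nlinarith
  have hX : (RatFunc.X : RatFunc F) ≠ 0 := RatFunc.X_ne_zero
  let ξ : (RatFunc F)ˣ := Units.mk0 RatFunc.X hX
  let α : (RatFunc F)ˣ := ξ ^ (N * A)
  let β : (RatFunc F)ˣ := ξ ^ B
  have hα : (α : RatFunc F) = RatFunc.X ^ (N * A) := by simp [α, ξ]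
  have hβ : (β : RatFunc F) = RatFunc.X ^ B := by simp [β, ξ]
  have hα1 : (α : RatFunc F)⁻¹ - α ≠ 0 := by rw [hα]; exact inv_sub_ne _ (by omega)
  have hβ1 : (β : RatFunc F)⁻¹ - β ≠ 0 := by rw [hβ]; exact inv_sub_ne _ (by omega)
  let x : SL2 (RatFunc F)[X] := uX ((α : RatFunc F)⁻¹ - α)⁻¹ (ξ ^ N)
  let y : SL2 (RatFunc F)[X] := uY ((β : RatFunc F)⁻¹ - β)⁻¹ ξ
  have hxy : ∀ i, ((x ^ a i * y ^ b i : SL2 (RatFunc F)[X]) : Matrix (Fin 2) (Fin 2) (RatFunc F)[X]) = 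
      Mm (RatFunc.X ^ (N * A) : RatFunc F) (RatFunc.X ^ B) ((a i).sign, (b i).sign) := by
    intro i
    rw [← hα, ← hβ, ← uXY α β hα1 hβ1 _ _ (hea i) (heb i)]
    have h1 : α ^ (a i).sign = (ξ ^ N) ^ a i := by
      conv_rhs => rw [hsa i]
      simp only [α, ← _root_.zpow_mul, mul_assoc]
    have h2 : β ^ (b i).sign = ξ ^ b i := by
      conv_rhs => rw [hsb i]
      simp only [β, ← _root_.zpow_mul]
    rw [h1, h2, map_zpow (uX _) (ξ ^ N) (a i), map_zpow (uY _) ξ (b i)]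
  let l : List (ℤ × ℤ) := List.ofFn fun i => ((a i).sign, (b i).sign)
  have hw : ((wordEval (wordOf a b) x y : SL2 (RatFunc F)[X]) : 
      Matrix (Fin 2) (Fin 2) (RatFunc F)[X]) = 
      (l.map (Mm (RatFunc.X ^ (N * A)) (RatFunc.X ^ B))).prod := by
    rw [word_mat, List.map_ofFn]
    congr 2
    funext i
    exact hxy i
  have htr := hf (RatFunc F)[X] x y
  rw [hw, eval_dec f q r hdec, dickson_up] at htr
  obtain ⟨D, hD, hfin⟩ := final (N * A) B hBpos hP l r hr hrF (by simp [l]) (by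
    intro p hp
    simp only [l, List.mem_ofFn] at hp
    obtain ⟨i, rfl⟩ := hp
    exact ⟨hea i, heb i⟩) _ htr
  have hs1 : (l.map Prod.fst).sum = ∑ i, (a i).sign := by
    simp only [l, List.map_ofFn, List.sum_ofFn, Function.comp_apply]
  have hs2 : (l.map Prod.snd).sum = ∑ i, (b i).sign := by
    simp only [l, List.map_ofFn, List.sum_ofFn, Function.comp_apply]
  rw [hs1, hs2] at hfin
  obtain ⟨e1, e2⟩ := arith r _ _ A B N D (by omega) hApos hBpos hN (sum_bd _ hea) (sum_bd _ heb) 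
    hD hfin
  have c1 := all_const hr _ hea e1
  have c2 := all_const hr _ heb e2
  intro i
  refine ⟨?_, ?_⟩
  · rw [hsa i, c1 i, ← hsa]
  · rw [hsb i, c2 i, ← hsb]
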